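/- Let n ≥ 1, s ∈ (0,1) with n > 2s, let K be an admissible kernel, and let q = n/(n−2s). If u is a nonnegative weak supersolution of L_K u = u^q in ℝⁿ, then u ∈ L^q(ℝⁿ); more precisely, sup_{R ≥ 1} ∫_{B_R} u(x)^q dx < ∞, where B_R is the open ball of radius R centered at the origin. -/

import Mathlib

open MeasureTheory Metric

noncomputable section

abbrev Euc (n : ℕ) := EuclideanSpace ℝ (Fin n)

def IsAdmissibleKernel (n : ℕ) (s lam Lam : ℝ) (K : Euc n → ℝ) : Prop :=
  0 < lam ∧ lam ≤ Lam ∧ Measurable K ∧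
  (∀ z : Euc n, z ≠ 0 → K z = K (-z)) ∧
  (∀ z : Euc n, z ≠ 0 →
    lam * ‖z‖ ^ (-(n : ℝ) - 2 * s) ≤ K z ∧ K z ≤ Lam * ‖z‖ ^ (-(n : ℝ) - 2 * s))

def LK (n : ℕ) (K φ : Euc n → ℝ) (x : Euc n) : ℝ :=
  (1 / 2) * ∫ z : Euc n, (2 * φ x - φ (x + z) - φ (x - z)) * K z

def IsTestFun (n : ℕ) (φ : Euc n → ℝ) : Prop :=
  ContDiff ℝ (⊤ : ℕ∞) φ ∧ HasCompactSupport φ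

def MemL1Tail (n : ℕ) (s : ℝ) (u : Euc n → ℝ) : Prop :=
  LocallyIntegrable u volume ∧
  Integrable (fun x : Euc n => |u x| * (1 + ‖x‖) ^ (-(n : ℝ) - 2 * s)) volume

def MemLqLoc (n : ℕ) (q : ℝ) (u : Euc n → ℝ) : Prop :=
  ∀ R : ℝ, 0 < R → IntegrableOn (fun x : Euc n => u x ^ q) (ball (0 : Euc n) R) volume

def IsWeakSupersol (n : ℕ) (s q : ℝ) (K u : Euc n → ℝ) : Prop :=
  Measurable u ∧ (∀ x, 0 ≤ u x) ∧ MemLqLoc n q u ∧ MemL1Tail n s u ∧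
  ∀ φ : Euc n → ℝ, IsTestFun n φ → (∀ x, 0 ≤ φ x) →
    (∫ x : Euc n, u x ^ q * φ x) ≤ ∫ x : Euc n, u x * LK n K φ x

def IsCutoff (n : ℕ) (η : Euc n → ℝ) : Prop :=
  ContDiff ℝ (⊤ : ℕ∞) η ∧ (∀ x, 0 ≤ η x ∧ η x ≤ 1) ∧
  (∀ x : Euc n, ‖x‖ ≤ 1 → η x = 1) ∧ (∀ x : Euc n, 2 ≤ ‖x‖ → η x = 0)

def cutoffSq (n : ℕ) (η : Euc n → ℝ) (R : ℝ) : Euc n → ℝ :=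
  fun x => (η (R⁻¹ • x)) ^ 2

/-!
Test the inequality with `φ = ψ ^ (k + 1)`, where `ψ = η (R⁻¹ • ·)` is a rescaled cutoff. Convexity
of `t ↦ t ^ (k + 1)` and the scaling of the kernel give `LK φ ≤ C * R ^ (-2 * s) * ψ ^ k` pointwise.
As soon as `k + 1 ≤ k * q`, Young's inequality with exponents `q` and `p = q / (q - 1)` bounds
`u * ψ ^ k * (C * R ^ (-2 * s))` by `u ^ q * φ / q` plus `(C * R ^ (-2 * s)) ^ p / p` on the support
of `ψ`. The first term is absorbed since `∫ u ^ q * φ` is finite, which leaves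
`∫_{B_R} u ^ q ≤ C' * R ^ (n - 2 * s * p)`; the critical exponent is the one with `2 * s * p = n`.
-/

/-! ### Elementary inequalities -/

lemma pow_succ_sub_pow_succ_le {𝕜 : Type*} [CommRing 𝕜] [LinearOrder 𝕜] [IsStrictOrderedRing 𝕜]
    {a b : 𝕜} (ha : 0 ≤ a) (hb : 0 ≤ b) (k : ℕ) :
    a ^ (k + 1) - b ^ (k + 1) ≤ (k + 1) * a ^ k * (a - b) := by
  induction k with
  | zero => simp
  | succ k ih =>
    have monotone : b ^ (k + 1) * (a - b) ≤ a ^ (k + 1) * (a - b) := by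
      rcases le_total a b with hab | hba
      · exact mul_le_mul_of_nonpos_right (pow_le_pow_left₀ ha hab _) (sub_nonpos.2 hab)
      · exact mul_le_mul_of_nonneg_right (pow_le_pow_left₀ hb hba _) (sub_nonneg.2 hba)
    calc a ^ (k + 1 + 1) - b ^ (k + 1 + 1)
        = a * (a ^ (k + 1) - b ^ (k + 1)) + b ^ (k + 1) * (a - b) := by ring
      _ ≤ a * ((k + 1) * a ^ k * (a - b)) + a ^ (k + 1) * (a - b) := by gcongr
      _ = ((k + 1 : ℕ) + 1) * a ^ (k + 1) * (a - b) := by push_cast; ring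

lemma mul_mul_pow_le_rpow_add_rpow {p q a b t : ℝ} {k : ℕ} (hqp : q.HolderConjugate p)
    (ha : 0 ≤ a) (hb : 0 ≤ b) (ht : t ∈ Set.Icc (0 : ℝ) 1) (hk : (k : ℝ) + 1 ≤ k * q) :
    a * (b * t ^ k) ≤ a ^ q * t ^ (k + 1) / q + b ^ p / p := by
  have hq : 0 < q := hqp.pos
  have ht_pow : (t ^ k) ^ q ≤ t ^ (k + 1) := by
    rw [← Real.rpow_natCast, ← Real.rpow_mul ht.1, ← Real.rpow_natCast, Nat.cast_succ]
    exact Real.rpow_le_rpow_of_exponent_ge' ht.1 ht.2 (by positivity) hk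
  calc a * (b * t ^ k) = a * t ^ k * b := by ring
    _ ≤ (a * t ^ k) ^ q / q + b ^ p / p :=
        Real.young_inequality_of_nonneg (mul_nonneg ha (pow_nonneg ht.1 k)) hb hqp
    _ = a ^ q * (t ^ k) ^ q / q + b ^ p / p := by
        rw [Real.mul_rpow ha (pow_nonneg ht.1 k)]
    _ ≤ a ^ q * t ^ (k + 1) / q + b ^ p / p := by
        have := Real.rpow_nonneg ha q
        gcongr

lemma le_of_le_div_add_div {p q a b : ℝ} (hqp : q.HolderConjugate p) (h : a ≤ a / q + b / p) :
    a ≤ b := by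
  have hsplit : a / q + a / p = a := by
    rw [div_eq_mul_inv, div_eq_mul_inv, ← mul_add, hqp.inv_add_inv_eq_one, mul_one]
  exact (div_le_div_iff_of_pos_right hqp.symm.pos).1 (by linarith)

/-! ### Second differences -/

section SecondDifference

variable {E F : Type*} [NormedAddCommGroup E] [NormedSpace ℝ E] [NormedAddCommGroup F]
  [NormedSpace ℝ F] {f : E → F}

lemma norm_sub_sub_fderiv_le_of_lipschitzWith {L : NNReal} (hf : Differentiable ℝ f)
    (hL : LipschitzWith L (fderiv ℝ f)) (x w : E) :
    ‖f (x + w) - f x - fderiv ℝ f x w‖ ≤ L * ‖w‖ ^ 2 := by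
  have hfderiv : ∀ y ∈ closedBall x ‖w‖, ‖fderiv ℝ f y - fderiv ℝ f x‖ ≤ L * ‖w‖ :=
    fun y hy => (hL.norm_sub_le y x).trans <|
      mul_le_mul_of_nonneg_left (mem_closedBall_iff_norm.1 hy) L.coe_nonneg
  have htaylor := (convex_closedBall x ‖w‖).norm_image_sub_le_of_norm_fderiv_le'
    (fun y _ => hf y) hfderiv (mem_closedBall_self (norm_nonneg w))
    (show x + w ∈ closedBall x ‖w‖ by simp)
  rwa [add_sub_cancel_left, mul_assoc, ← sq] at htaylor

lemma norm_secondDiff_le_of_lipschitzWith {L : NNReal} (hf : Differentiable ℝ f)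
    (hL : LipschitzWith L (fderiv ℝ f)) (x w : E) :
    ‖(2 : ℝ) • f x - f (x + w) - f (x - w)‖ ≤ 2 * L * ‖w‖ ^ 2 := by
  have hforward := norm_sub_sub_fderiv_le_of_lipschitzWith hf hL x w
  have hbackward := norm_sub_sub_fderiv_le_of_lipschitzWith hf hL x (-w)
  rw [norm_neg, ← sub_eq_add_neg] at hbackward
  calc ‖(2 : ℝ) • f x - f (x + w) - f (x - w)‖
      = ‖(f (x + w) - f x - fderiv ℝ f x w) + (f (x - w) - f x - fderiv ℝ f x (-w))‖ := by
        rw [← norm_neg, map_neg, two_smul]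
        congr 1
        abel
    _ ≤ L * ‖w‖ ^ 2 + L * ‖w‖ ^ 2 := norm_add_le_of_le hforward hbackward
    _ = 2 * L * ‖w‖ ^ 2 := by ring

lemma exists_norm_secondDiff_le (hf : ContDiff ℝ 2 f) (hc : HasCompactSupport f) :
    ∃ C : ℝ, 0 ≤ C ∧ ∀ x w : E,
      ‖(2 : ℝ) • f x - f (x + w) - f (x - w)‖ ≤ C * min (‖w‖ ^ 2) 1 := by
  obtain ⟨L, hL⟩ := ContDiff.lipschitzWith_of_hasCompactSupport (hc.fderiv ℝ)
    (hf.fderiv_right (m := 1) (by norm_num)) one_ne_zero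
  obtain ⟨M, hM⟩ := hc.exists_bound_of_continuous hf.continuous
  have hbounded : ∀ x w : E, ‖(2 : ℝ) • f x - f (x + w) - f (x - w)‖ ≤ 4 * M := fun x w =>
    calc ‖(2 : ℝ) • f x - f (x + w) - f (x - w)‖
        ≤ ‖(2 : ℝ) • f x‖ + ‖f (x + w)‖ + ‖f (x - w)‖ :=
          (norm_sub_le _ _).trans (add_le_add_left (norm_sub_le _ _) _)
      _ ≤ 2 * M + M + M := by
          rw [norm_smul, Real.norm_two]
          gcongr <;> exact hM _
      _ = 4 * M := by ring
  have hC : 0 ≤ max (2 * (L : ℝ)) (4 * M) := le_max_of_le_left (by positivity)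
  refine ⟨max (2 * L) (4 * M), hC, fun x w => ?_⟩
  rw [mul_min_of_nonneg _ _ hC, mul_one]
  refine le_min ?_ ((hbounded x w).trans (le_max_right _ _))
  refine (norm_secondDiff_le_of_lipschitzWith (hf.differentiable two_ne_zero) hL x w).trans ?_
  gcongr
  exact le_max_left _ _

end SecondDifference

/-! ### Integration -/

lemma integral_le_integral_of_le_of_nonneg {α : Type*} [MeasurableSpace α] {μ : Measure α}
    {f g : α → ℝ} (hg : Integrable g μ) (hg0 : 0 ≤ g) (h : f ≤ g) :
    ∫ x, f x ∂μ ≤ ∫ x, g x ∂μ := by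
  by_cases hf : Integrable f μ
  · exact integral_mono hf hg h
  -- the Bochner integral of a non-integrable function is `0`
  · rw [integral_undef hf]
    exact integral_nonneg hg0

lemma integrable_of_setIntegral_ball_le {X : Type*} [PseudoMetricSpace X] [MeasurableSpace X]
    [OpensMeasurableSpace X] {μ : Measure X} {f : X → ℝ} {x₀ : X} {C : ℝ} (hf0 : 0 ≤ f)
    (hf : ∀ R, 0 < R → IntegrableOn f (ball x₀ R) μ)
    (hC : ∀ R, 1 ≤ R → ∫ x in ball x₀ R, f x ∂μ ≤ C) : Integrable f μ := by
  have hcover : AECover μ Filter.atTop fun i : ℕ => ball x₀ ((i : ℝ) + 1) :=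
    aecover_ball (Filter.tendsto_atTop_add_const_right _ _ tendsto_natCast_atTop_atTop)
  exact hcover.integrable_of_integral_bounded_of_nonneg_ae C (fun i => hf _ (by positivity))
    (.of_forall hf0) (.of_forall fun i => hC _ (le_add_of_nonneg_left i.cast_nonneg))

lemma integrableOn_Ioi_min_sq_one_mul_rpow {s : ℝ} (hs : s ∈ Set.Ioo (0 : ℝ) 1) :
    IntegrableOn (fun r : ℝ => min (r ^ 2) 1 * r ^ (-1 - 2 * s)) (Set.Ioi 0) := by
  rw [← Set.Ioc_union_Ioi_eq_Ioi (zero_le_one (α := ℝ))]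
  refine IntegrableOn.union ?near_zero ?near_infinity
  case near_zero =>
    have hpow : IntegrableOn (fun r : ℝ => r ^ (1 - 2 * s)) (Set.Ioc 0 1) :=
      (intervalIntegrable_iff_integrableOn_Ioc_of_le zero_le_one).1 <|
        intervalIntegral.intervalIntegrable_rpow' (by linarith [hs.2])
    refine hpow.congr_fun (fun r hr => ?_) measurableSet_Ioc
    simp only [min_eq_left (pow_le_one₀ hr.1.le hr.2)]
    rw [← Real.rpow_natCast, ← Real.rpow_add hr.1]
    congr 1
    push_cast
    ring
  case near_infinity =>
    refine (integrableOn_Ioi_rpow_of_lt (a := -1 - 2 * s) (by linarith [hs.1]) one_pos).congr_fun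
      (fun r hr => ?_) measurableSet_Ioi
    simp only [min_eq_right (one_le_pow₀ (Set.mem_Ioi.1 hr).le), one_mul]

lemma integrable_min_sq_norm_one_mul_rpow_norm {E : Type*} [NormedAddCommGroup E]
    [NormedSpace ℝ E] [FiniteDimensional ℝ E] [Nontrivial E] [MeasurableSpace E] [BorelSpace E]
    (μ : Measure E) [μ.IsAddHaarMeasure] {s : ℝ} (hs : s ∈ Set.Ioo (0 : ℝ) 1) :
    Integrable (fun z : E => min (‖z‖ ^ 2) 1 * ‖z‖ ^ (-(Module.finrank ℝ E : ℝ) - 2 * s)) μ := by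
  refine (integrable_fun_norm_addHaar μ
    (f := fun r => min (r ^ 2) 1 * r ^ (-(Module.finrank ℝ E : ℝ) - 2 * s))).2 ?_
  refine (integrableOn_Ioi_min_sq_one_mul_rpow hs).congr_fun (fun r hr => ?_) measurableSet_Ioi
  have hr0 : 0 < r := hr
  have hpow : r ^ (-1 - 2 * s) =
      r ^ (Module.finrank ℝ E - 1) * r ^ (-(Module.finrank ℝ E : ℝ) - 2 * s) := by
    rw [← Real.rpow_natCast, ← Real.rpow_add hr0, Nat.cast_pred Module.finrank_pos]
    congr 1
    ring
  simp only [smul_eq_mul, hpow]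
  ring

/-! ### Test functions -/

section

variable {n : ℕ} {s q p Lam B : ℝ} {K u φ η ψ : Euc n → ℝ} {k : ℕ}

lemma IsTestFun.pow_succ (hφ : IsTestFun n φ) (k : ℕ) :
    IsTestFun n fun x => φ x ^ (k + 1) :=
  ⟨hφ.1.pow _, hφ.2.comp_left (g := fun t : ℝ => t ^ (k + 1)) (zero_pow k.succ_ne_zero)⟩

lemma IsTestFun.comp_smul (hφ : IsTestFun n φ) {c : ℝ} (hc : c ≠ 0) :
    IsTestFun n fun x => φ (c • x) :=
  ⟨hφ.1.comp (contDiff_const_smul c), hφ.2.comp_smul hc⟩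

lemma exists_isTestFun_eq_one_on_ball (n : ℕ) :
    ∃ η : Euc n → ℝ, IsTestFun n η ∧ (∀ x, η x ∈ Set.Icc (0 : ℝ) 1) ∧ ∀ x ∈ ball 0 1, η x = 1 := by
  let b : ContDiffBump (0 : Euc n) := ⟨1, 2, one_pos, one_lt_two⟩
  exact ⟨b, ⟨b.contDiff, b.hasCompactSupport⟩, fun x => ⟨b.nonneg, b.le_one⟩,
    fun x hx => b.one_of_mem_closedBall (ball_subset_closedBall hx)⟩

/-! ### The nonlocal operator -/

/-- A measurable nonnegative kernel dominated by `Lam` times that of the fractional Laplacian of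
order `2 * s`: the upper half of `IsAdmissibleKernel`, allowing the kernel to degenerate and to be
asymmetric. -/
structure IsDominatedKernel (n : ℕ) (s Lam : ℝ) (K : Euc n → ℝ) : Prop where
  measurable : Measurable K
  nonneg : ∀ z, z ≠ 0 → 0 ≤ K z
  le : ∀ z, z ≠ 0 → K z ≤ Lam * ‖z‖ ^ (-(n : ℝ) - 2 * s)

lemma IsAdmissibleKernel.isDominatedKernel {lam : ℝ} (hK : IsAdmissibleKernel n s lam Lam K) :
    IsDominatedKernel n s Lam K :=
  have ⟨hlam, _, hmeas, _, hbounds⟩ := hK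
  ⟨hmeas, fun z hz => (by positivity : 0 ≤ lam * _).trans (hbounds z hz).1,
    fun z hz => (hbounds z hz).2⟩

lemma IsDominatedKernel.bound_nonneg [NeZero n] (hK : IsDominatedKernel n s Lam K) : 0 ≤ Lam := by
  obtain ⟨z, hz⟩ := exists_ne (0 : Euc n)
  have : 0 < ‖z‖ := norm_pos_iff.2 hz
  exact nonneg_of_mul_nonneg_left ((hK.nonneg z hz).trans (hK.le z hz)) (by positivity)

/-- The density `min (|z| ^ 2) 1 * |z| ^ (-n - 2 * s)`, whose finite integral is the Lévy
condition on the kernel of the fractional Laplacian; up to a constant it dominates the integrand of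
`LK` at a test function. -/
def levyWeight (n : ℕ) (s : ℝ) (z : Euc n) : ℝ :=
  min (‖z‖ ^ 2) 1 * ‖z‖ ^ (-(n : ℝ) - 2 * s)

lemma levyWeight_nonneg (n : ℕ) (s : ℝ) : 0 ≤ levyWeight n s := fun z => by
  unfold levyWeight
  positivity

lemma integrable_levyWeight [NeZero n] (hs : s ∈ Set.Ioo (0 : ℝ) 1) :
    Integrable (levyWeight n s) := by
  have hint := integrable_min_sq_norm_one_mul_rpow_norm (volume : Measure (Euc n)) hs
  rwa [finrank_euclideanSpace_fin] at hint

lemma min_sq_norm_inv_smul_mul_rpow {R : ℝ} (hR : 0 < R) (z : Euc n) :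
    min (‖R⁻¹ • z‖ ^ 2) 1 * ‖z‖ ^ (-(n : ℝ) - 2 * s) =
      R ^ (-(n : ℝ) - 2 * s) * levyWeight n s (R⁻¹ • z) := by
  have hnorm : ‖z‖ = R * ‖R⁻¹ • z‖ := by
    rw [norm_smul, norm_inv, Real.norm_of_nonneg hR.le, mul_inv_cancel_left₀ hR.ne']
  have hpow : ‖z‖ ^ (-(n : ℝ) - 2 * s) =
      R ^ (-(n : ℝ) - 2 * s) * ‖R⁻¹ • z‖ ^ (-(n : ℝ) - 2 * s) := by
    rw [← Real.mul_rpow hR.le (norm_nonneg _), ← hnorm]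
  rw [hpow, levyWeight]
  ring

lemma rpow_mul_integral_levyWeight_inv_smul (n : ℕ) (s : ℝ) {R : ℝ} (hR : 0 < R) :
    R ^ (-(n : ℝ) - 2 * s) * ∫ z, levyWeight n s (R⁻¹ • z) =
      R ^ (-2 * s) * ∫ z, levyWeight n s z := by
  rw [Measure.integral_comp_inv_smul_of_nonneg volume (levyWeight n s) hR.le,
    finrank_euclideanSpace_fin, smul_eq_mul, ← mul_assoc, ← Real.rpow_natCast R n,
    ← Real.rpow_add hR]
  congr 2
  ring

lemma LK_le_of_secondDiff_le [NeZero n] (hs : s ∈ Set.Ioo (0 : ℝ) 1)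
    (hK : IsDominatedKernel n s Lam K) {R A : ℝ} (hR : 0 < R) (hA : 0 ≤ A) {x : Euc n}
    (h : ∀ z, 2 * φ x - φ (x + z) - φ (x - z) ≤ A * min (‖R⁻¹ • z‖ ^ 2) 1) :
    LK n K φ x ≤ A * (Lam / 2 * ∫ z, levyWeight n s z) * R ^ (-2 * s) := by
  set a : ℝ := A * Lam * R ^ (-(n : ℝ) - 2 * s)
  have ha : 0 ≤ a := mul_nonneg (mul_nonneg hA hK.bound_nonneg) (Real.rpow_nonneg hR.le _)
  have hdom : ∀ z, (2 * φ x - φ (x + z) - φ (x - z)) * K z ≤ a * levyWeight n s (R⁻¹ • z) := by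
    intro z
    rcases eq_or_ne z 0 with rfl | hz
    · have hzero : 2 * φ x - φ (x + 0) - φ (x - 0) = 0 := by rw [add_zero, sub_zero]; ring
      rw [hzero, zero_mul]
      exact mul_nonneg ha (levyWeight_nonneg n s _)
    · calc (2 * φ x - φ (x + z) - φ (x - z)) * K z
          ≤ A * min (‖R⁻¹ • z‖ ^ 2) 1 * K z :=
            mul_le_mul_of_nonneg_right (h z) (hK.nonneg z hz)
        _ ≤ A * min (‖R⁻¹ • z‖ ^ 2) 1 * (Lam * ‖z‖ ^ (-(n : ℝ) - 2 * s)) :=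
            mul_le_mul_of_nonneg_left (hK.le z hz) (by positivity)
        _ = A * Lam * (min (‖R⁻¹ • z‖ ^ 2) 1 * ‖z‖ ^ (-(n : ℝ) - 2 * s)) := by ring
        _ = a * levyWeight n s (R⁻¹ • z) := by
            rw [min_sq_norm_inv_smul_mul_rpow hR, ← mul_assoc]
  have hint : Integrable fun z => a * levyWeight n s (R⁻¹ • z) :=
    ((integrable_levyWeight hs).comp_smul (inv_ne_zero hR.ne')).const_mul a
  calc LK n K φ x ≤ 1 / 2 * ∫ z, a * levyWeight n s (R⁻¹ • z) :=
        mul_le_mul_of_nonneg_left (integral_le_integral_of_le_of_nonneg hint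
          (fun z => mul_nonneg ha (levyWeight_nonneg n s _)) hdom) one_half_pos.le
    _ = A * Lam / 2 * (R ^ (-(n : ℝ) - 2 * s) * ∫ z, levyWeight n s (R⁻¹ • z)) := by
        rw [integral_const_mul]
        ring
    _ = A * (Lam / 2 * ∫ z, levyWeight n s z) * R ^ (-2 * s) := by
        rw [rpow_mul_integral_levyWeight_inv_smul n s hR]
        ring

lemma exists_LK_pow_succ_comp_inv_smul_le [NeZero n] (hs : s ∈ Set.Ioo (0 : ℝ) 1)
    (hK : IsDominatedKernel n s Lam K) (hη : IsTestFun n η) (hη0 : ∀ x, 0 ≤ η x) (k : ℕ) :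
    ∃ C : ℝ, 0 ≤ C ∧ ∀ R : ℝ, 0 < R → ∀ x,
      LK n K (fun y => η (R⁻¹ • y) ^ (k + 1)) x ≤ C * R ^ (-2 * s) * η (R⁻¹ • x) ^ k := by
  obtain ⟨C, hC, hsecond⟩ := exists_norm_secondDiff_le (hη.1.of_le (by norm_cast)) hη.2
  have hmass : 0 ≤ Lam / 2 * ∫ z, levyWeight n s z :=
    mul_nonneg (div_nonneg hK.bound_nonneg zero_le_two) (integral_nonneg (levyWeight_nonneg n s))
  refine ⟨(k + 1) * C * (Lam / 2 * ∫ z, levyWeight n s z), by positivity, fun R hR x => ?_⟩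
  have hcoeff : 0 ≤ ((k : ℝ) + 1) * η (R⁻¹ • x) ^ k :=
    mul_nonneg (by positivity) (pow_nonneg (hη0 _) k)
  refine (LK_le_of_secondDiff_le hs hK hR (mul_nonneg hcoeff hC) fun z => ?_).trans_eq (by ring)
  have htangent := fun y => pow_succ_sub_pow_succ_le (hη0 (R⁻¹ • x)) (hη0 (R⁻¹ • y)) k
  calc 2 * η (R⁻¹ • x) ^ (k + 1) - η (R⁻¹ • (x + z)) ^ (k + 1) - η (R⁻¹ • (x - z)) ^ (k + 1)
      ≤ (k + 1) * η (R⁻¹ • x) ^ k *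
          (2 * η (R⁻¹ • x) - η (R⁻¹ • (x + z)) - η (R⁻¹ • (x - z))) := by
        linarith [htangent (x + z), htangent (x - z)]
    _ ≤ (k + 1) * η (R⁻¹ • x) ^ k * (C * min (‖R⁻¹ • z‖ ^ 2) 1) := by
        rw [smul_add, smul_sub]
        exact mul_le_mul_of_nonneg_left
          ((Real.le_norm_self _).trans (hsecond (R⁻¹ • x) (R⁻¹ • z))) hcoeff
    _ = (k + 1) * η (R⁻¹ • x) ^ k * C * min (‖R⁻¹ • z‖ ^ 2) 1 := by ring

/-! ### Supersolutions -/

lemma MemLqLoc.locallyIntegrable (hu : MemLqLoc n q u) :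
    LocallyIntegrable (fun x => u x ^ q) := fun x =>
  ⟨ball 0 (‖x‖ + 1), isOpen_ball.mem_nhds (mem_ball_zero_iff.2 (lt_add_one _)),
    hu (‖x‖ + 1) (by positivity)⟩

lemma MemLqLoc.integrable_rpow_mul (hu : MemLqLoc n q u) (hφ : IsTestFun n φ) :
    Integrable fun x => u x ^ q * φ x :=
  hu.locallyIntegrable.integrable_smul_right_of_hasCompactSupport hφ.1.continuous hφ.2

lemma IsWeakSupersol.integral_rpow_mul_pow_succ_le (hu : IsWeakSupersol n s q K u)
    (hqp : q.HolderConjugate p) (hk : (k : ℝ) + 1 ≤ k * q) (hψ : IsTestFun n ψ)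
    (hψ01 : ∀ x, ψ x ∈ Set.Icc (0 : ℝ) 1) (hB : 0 ≤ B)
    (hLK : ∀ x, LK n K (fun y => ψ y ^ (k + 1)) x ≤ B * ψ x ^ k) :
    ∫ x, u x ^ q * ψ x ^ (k + 1) ≤ B ^ p * volume.real (Function.support ψ) := by
  obtain ⟨-, hu0, huq, -, hsuper⟩ := hu
  have hp : 0 < p := hqp.symm.pos
  have hk0 : k ≠ 0 := by
    rintro rfl
    norm_num at hk
  have hmeas : MeasurableSet (Function.support ψ) :=
    hψ.1.continuous.isOpen_support.measurableSet
  have hfinite : volume (Function.support ψ) ≠ ⊤ :=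
    ((measure_mono subset_closure).trans_lt hψ.2.measure_lt_top).ne
  set J : Euc n → ℝ := fun x => u x ^ q * ψ x ^ (k + 1)
  set D : Euc n → ℝ := (Function.support ψ).indicator fun _ => B ^ p / p
  have hJ0 : ∀ x, 0 ≤ J x := fun x =>
    mul_nonneg (Real.rpow_nonneg (hu0 x) q) (pow_nonneg (hψ01 x).1 _)
  have hJ : Integrable fun x => J x / q := (huq.integrable_rpow_mul (hψ.pow_succ k)).div_const q
  have hD0 : ∀ x, 0 ≤ D x := fun x => Set.indicator_nonneg (fun _ _ => by positivity) x
  have hD : Integrable D := (integrable_indicator_iff hmeas).2 (integrableOn_const hfinite)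
  have hyoung : ∀ x, u x * LK n K (fun y => ψ y ^ (k + 1)) x ≤ J x / q + D x := by
    intro x
    refine (mul_le_mul_of_nonneg_left (hLK x) (hu0 x)).trans ?_
    by_cases hx : x ∈ Function.support ψ
    · simp only [D, Set.indicator_of_mem hx]
      exact mul_mul_pow_le_rpow_add_rpow hqp (hu0 x) hB (hψ01 x) hk
    · rw [Function.notMem_support.1 hx, zero_pow hk0, mul_zero, mul_zero]
      exact add_nonneg (div_nonneg (hJ0 x) hqp.nonneg) (hD0 x)
  refine le_of_le_div_add_div hqp ?_
  calc ∫ x, J x ≤ ∫ x, u x * LK n K (fun y => ψ y ^ (k + 1)) x :=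
        hsuper _ (hψ.pow_succ k) fun x => pow_nonneg (hψ01 x).1 _
    _ ≤ ∫ x, (J x / q + D x) := integral_le_integral_of_le_of_nonneg (hJ.add hD)
        (fun x => add_nonneg (div_nonneg (hJ0 x) hqp.nonneg) (hD0 x)) hyoung
    _ = (∫ x, J x) / q + B ^ p * volume.real (Function.support ψ) / p := by
        rw [integral_add hJ hD, integral_div, integral_indicator hmeas, setIntegral_const,
          smul_eq_mul]
        ring

lemma volume_real_support_comp_inv_smul (η : Euc n → ℝ) {R : ℝ} (hR : 0 < R) :
    volume.real (Function.support fun x => η (R⁻¹ • x)) =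
      R ^ n * volume.real (Function.support η) := by
  change volume.real ((fun x => R⁻¹ • x) ⁻¹' Function.support η) = _
  rw [measureReal_def, Measure.addHaar_preimage_smul volume (inv_ne_zero hR.ne'),
    finrank_euclideanSpace_fin, inv_pow, inv_inv, abs_of_pos (pow_pos hR n),
    ENNReal.toReal_mul, ENNReal.toReal_ofReal (pow_pos hR n).le, measureReal_def]

lemma IsWeakSupersol.exists_setIntegral_ball_rpow_le [NeZero n] (hs : s ∈ Set.Ioo (0 : ℝ) 1)
    (hK : IsDominatedKernel n s Lam K) (hqp : q.HolderConjugate p)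
    (hu : IsWeakSupersol n s q K u) :
    ∃ C : ℝ, 0 ≤ C ∧ ∀ R : ℝ, 0 < R →
      ∫ x in ball (0 : Euc n) R, u x ^ q ≤ C * R ^ (n - 2 * s * p) := by
  obtain ⟨k, hk⟩ : ∃ k : ℕ, (k : ℝ) + 1 ≤ k * q := by
    obtain ⟨k, hk⟩ := exists_nat_ge (1 / (q - 1))
    exact ⟨k, by linarith [(div_le_iff₀ (sub_pos.2 hqp.lt)).1 hk]⟩
  obtain ⟨η, hη, hη01, hη_one⟩ := exists_isTestFun_eq_one_on_ball n
  obtain ⟨C, hC, hLK⟩ := exists_LK_pow_succ_comp_inv_smul_le hs hK hη (fun x => (hη01 x).1) k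
  refine ⟨C ^ p * volume.real (Function.support η), by positivity, fun R hR => ?_⟩
  have hηR : IsTestFun n fun x => η (R⁻¹ • x) := hη.comp_smul (inv_ne_zero hR.ne')
  have hηR_one : ∀ x ∈ ball (0 : Euc n) R, η (R⁻¹ • x) = 1 := fun x hx => hη_one _ <| by
    rw [mem_ball_zero_iff] at hx ⊢
    rwa [norm_smul, norm_inv, Real.norm_of_nonneg hR.le, inv_mul_lt_one₀ hR]
  calc ∫ x in ball (0 : Euc n) R, u x ^ q
      = ∫ x in ball (0 : Euc n) R, u x ^ q * η (R⁻¹ • x) ^ (k + 1) :=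
        setIntegral_congr_fun measurableSet_ball fun x hx => by simp [hηR_one x hx]
    _ ≤ ∫ x, u x ^ q * η (R⁻¹ • x) ^ (k + 1) :=
        setIntegral_le_integral (hu.2.2.1.integrable_rpow_mul (hηR.pow_succ k)) <|
          .of_forall fun x => mul_nonneg (Real.rpow_nonneg (hu.2.1 x) q)
            (pow_nonneg (hη01 _).1 _)
    _ ≤ (C * R ^ (-2 * s)) ^ p * volume.real (Function.support fun x => η (R⁻¹ • x)) :=
        hu.integral_rpow_mul_pow_succ_le hqp hk hηR (fun x => hη01 _) (by positivity) (hLK R hR)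
    _ = C ^ p * volume.real (Function.support η) * (R ^ (-2 * s * p) * R ^ (n : ℝ)) := by
        rw [volume_real_support_comp_inv_smul η hR, Real.mul_rpow hC (by positivity),
          ← Real.rpow_mul hR.le, Real.rpow_natCast]
        ring
    _ = C ^ p * volume.real (Function.support η) * R ^ (n - 2 * s * p) := by
        rw [← Real.rpow_add hR]
        ring_nf

end

theorem critical_global_Lq_general {n : ℕ} [NeZero n] {s Lam q : ℝ} {K u : Euc n → ℝ}
    (hs : s ∈ Set.Ioo (0 : ℝ) 1) (hK : IsDominatedKernel n s Lam K) (hq : 1 < q)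
    (hqn : q * (n - 2 * s) ≤ n) (hu : IsWeakSupersol n s q K u) :
    Integrable (fun x : Euc n => u x ^ q) volume ∧
    ∃ C : ℝ, ∀ R : ℝ, 1 ≤ R →
      (∫ x in ball (0 : Euc n) R, u x ^ q) ≤ C := by
  obtain ⟨C, hC, hball⟩ := hu.exists_setIntegral_ball_rpow_le hs hK (.conjExponent hq)
  have hexponent : n - 2 * s * q.conjExponent ≤ 0 := by
    rw [Real.conjExponent, sub_nonpos, ← mul_div_assoc, le_div_iff₀ (sub_pos.2 hq)]
    linarith
  have hbounded : ∀ R : ℝ, 1 ≤ R → ∫ x in ball (0 : Euc n) R, u x ^ q ≤ C := fun R hR =>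
    (hball R (by linarith)).trans <|
      mul_le_of_le_one_right hC (Real.rpow_le_one_of_one_le_of_nonpos hR hexponent)
  exact ⟨integrable_of_setIntegral_ball_le (fun x => Real.rpow_nonneg (hu.2.1 x) q) hu.2.2.1
    hbounded, C, hbounded⟩

/-- In the critical case `q = n/(n-2s)`, any nonnegative weak supersolution
belongs to `L^q(ℝ^n)`; more precisely the local masses `∫_{B_R} u^q` are uniformly bounded. -/
theorem critical_global_Lq
    (n : ℕ) (hn : 1 ≤ n) (s : ℝ) (hs : s ∈ Set.Ioo (0 : ℝ) 1)
    (hns : 2 * s < (n : ℝ))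
    (lam Lam : ℝ) (K : Euc n → ℝ) (hK : IsAdmissibleKernel n s lam Lam K)
    (q : ℝ) (hq : q = (n : ℝ) / ((n : ℝ) - 2 * s))
    (u : Euc n → ℝ) (hu : IsWeakSupersol n s q K u) :
    Integrable (fun x : Euc n => u x ^ q) volume ∧
    ∃ C : ℝ, ∀ R : ℝ, 1 ≤ R →
      (∫ x in ball (0 : Euc n) R, u x ^ q) ≤ C := by
  have : NeZero n := ⟨by lia⟩
  have hpos : 0 < (n : ℝ) - 2 * s := sub_pos.2 hns
  exact critical_global_Lq_general hs hK.isDominatedKernel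
    (hq ▸ (one_lt_div hpos).2 (by linarith [hs.1])) (hq ▸ (div_mul_cancel₀ _ hpos.ne').le) hu
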